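/- Let a, b be positive integers with a ≤ b. If the quadratic form f^{a,b}_1(x,y,z,w) = a·x² + b·y² + (z² + z·w + w²) represents each of the integers 1, 2, 6, 10 (with x, y, z, w ∈ ℤ), then it represents every nonnegative integer. -/

import Mathlib

/-!
The conditions at `2`, `6` and `10` leave finitely many pairs: `a = 1, b ≤ 6` and
`a = 2, 2 ≤ b ≤ 10`, because `z² + zw + w²` is never `≡ 2` modulo `3` or modulo `4`. For these
pairs every `n` is represented, and the proof subtracts a suitable `b y²` from `n` and represents the
difference by one of the ternary forms

* `T₁ = x² + y² + yz + z²`, which represents all positive integers prime to `3`;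
* `T₂ = 2x² + y² + yz + z²`, which represents all positive odd integers, and `2u` for `u > 0` prime
  to `6` with `u ≢ 5 (mod 8)`.

Multiplication by `4`, and by `3` for the pairs involving `3` and `6`, reduces to `n` for which
such a `y` exists; a few small `n` are searched directly.

The ternary statements follow the classical proof of the three squares theorem. To represent `m`,
one constructs a positive definite form `a x² + c y² + m z² + s xz + r xy` with the half-discriminant
of the target form (`3` for `T₁`, `6` for `T₂`). Writing `D = 4ac - r²`, this means
`m D - c s² = 3` (or `6`) with `-D` a square modulo `4c`. Dirichlet's theorem allows `c` to be taken
a small multiple of a prime `p`, and quadratic reciprocity for the Jacobi symbol shows that `-D`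
is a square modulo `p`. Hermite reduction then identifies the form constructed: half-discriminant
`3` has the single class `T₁`, while half-discriminant `6` has the classes `T₂` and
`T₂' = x² + y² + 2z² + xz + yz`. The second is excluded modulo powers of `3`: its binary minors are
never `≡ 2 (mod 3)`, and its values are never `≡ 3 (mod 9)`.
-/

/-! ### Reduction of ternary forms -/

/-- The integral ternary quadratic form with coefficients `a, b, c` on the squares and `p, q, r`
on `yz`, `xz`, `xy`. -/
def ternary (a b c p q r x y z : ℤ) : ℤ :=
  a * x ^ 2 + b * y ^ 2 + c * z ^ 2 + p * (y * z) + q * (x * z) + r * (x * y)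

/-- The ternary form with the given coefficients is the pullback of `T` along some integral linear
map `ℤ³ → ℤ³` (the columns of the map are the images of the basis vectors). -/
def Embeds (a b c p q r : ℤ) (T : ℤ → ℤ → ℤ → ℤ) : Prop :=
  ∃ u₁ u₂ u₃ v₁ v₂ v₃ w₁ w₂ w₃ : ℤ, ∀ x y z : ℤ,
    ternary a b c p q r x y z =
      T (u₁ * x + v₁ * y + w₁ * z) (u₂ * x + v₂ * y + w₂ * z) (u₃ * x + v₃ * y + w₃ * z)

/-- `x² + y² + yz + z²`. -/
def T₁ (x y z : ℤ) : ℤ := x ^ 2 + (y ^ 2 + y * z + z ^ 2)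

/-- `2x² + y² + yz + z²`. -/
def T₂ (x y z : ℤ) : ℤ := 2 * x ^ 2 + (y ^ 2 + y * z + z ^ 2)

/-- The other class of half-discriminant `6`; it lies in a different genus from `T₂`. -/
def T₂' (x y z : ℤ) : ℤ := x ^ 2 + y ^ 2 + 2 * z ^ 2 + x * z + y * z

theorem exists_shift {a : ℤ} (ha : 0 < a) (r : ℤ) : ∃ t : ℤ, |r + 2 * a * t| ≤ a := by
  refine ⟨-((r + a) / (2 * a)), ?_⟩
  have h1 := Int.emod_add_mul_ediv (r + a) (2 * a)
  have h2 := Int.emod_nonneg (r + a) (by omega : (2 * a) ≠ 0)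
  have h3 := Int.emod_lt_of_pos (r + a) (by omega : 0 < 2 * a)
  rw [abs_le]
  constructor <;> linarith

/-- Gauss reduction of the positive definite binary form `A y² + 2B yz + C z²`. -/
theorem binary_reduction (n : ℕ) : ∀ A B C : ℤ, A.toNat = n → 0 < A → 0 < A * C - B ^ 2 →
    ∃ α β γ δ : ℤ, α * δ - β * γ = 1 ∧
      0 < A * α ^ 2 + 2 * B * (α * γ) + C * γ ^ 2 ∧
      A * α ^ 2 + 2 * B * (α * γ) + C * γ ^ 2 ≤ A * β ^ 2 + 2 * B * (β * δ) + C * δ ^ 2 ∧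
      2 * |A * (α * β) + B * (α * δ + β * γ) + C * (γ * δ)| ≤
        A * α ^ 2 + 2 * B * (α * γ) + C * γ ^ 2 := by
  induction n using Nat.strong_induction_on with
  | _ n ih =>
    intro A B C hn hA hD
    obtain ⟨t, ht⟩ := exists_shift hA (2 * B)
    have ht' : 2 * |B + A * t| ≤ A := by
      have e : 2 * B + 2 * A * t = 2 * (B + A * t) := by ring
      rwa [e, abs_mul, abs_two] at ht
    by_cases hC : A ≤ A * t ^ 2 + 2 * B * t + C
    · refine ⟨1, t, 0, 1, by ring, by linarith, by linarith, ?_⟩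
      convert ht' using 1
      · congr 2; ring
      · ring
    · have hC0 : 0 < A * t ^ 2 + 2 * B * t + C := by
        by_contra h
        nlinarith [sq_nonneg (A * t + B)]
      obtain ⟨α, β, γ, δ, h1, h2, h3, h4⟩ :=
        ih (A * t ^ 2 + 2 * B * t + C).toNat (by omega)
          (A * t ^ 2 + 2 * B * t + C) (-(A * t + B)) A rfl hC0 (by nlinarith)
      refine ⟨t * α - γ, t * β - δ, α, β, by linear_combination h1, ?_, ?_, ?_⟩
      · convert h2 using 1; ring
      · convert h3 using 1 <;> ring
      · convert h4 using 1
        · congr 2; ring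
        · ring

/-- Invariance of `Embeds` under a change of the variables `y, z` in `SL₂(ℤ)`. -/
theorem Embeds.of_sl2 {a b c p q r α β γ δ : ℤ} {T} (h1 : α * δ - β * γ = 1)
    (h : Embeds a (b * α ^ 2 + c * γ ^ 2 + p * (α * γ)) (b * β ^ 2 + c * δ ^ 2 + p * (β * δ))
      (2 * b * (α * β) + 2 * c * (γ * δ) + p * (α * δ + β * γ)) (q * δ + r * β)
      (r * α + q * γ) T) : Embeds a b c p q r T := by
  obtain ⟨u₁, u₂, u₃, v₁, v₂, v₃, w₁, w₂, w₃, h⟩ := h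
  refine ⟨u₁, u₂, u₃, v₁ * δ - w₁ * γ, v₂ * δ - w₂ * γ, v₃ * δ - w₃ * γ,
    -v₁ * β + w₁ * α, -v₂ * β + w₂ * α, -v₃ * β + w₃ * α, fun x y z => ?_⟩
  have hy : α * (δ * y - β * z) + β * (-γ * y + α * z) = y := by linear_combination y * h1
  have hz : γ * (δ * y - β * z) + δ * (-γ * y + α * z) = z := by linear_combination z * h1
  have h2 := h x (δ * y - β * z) (-γ * y + α * z)
  have h3 : ternary a b c p q r x y z = ternary a b c p q r x
      (α * (δ * y - β * z) + β * (-γ * y + α * z))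
      (γ * (δ * y - β * z) + δ * (-γ * y + α * z)) := by rw [hy, hz]
  rw [h3]
  convert h2 using 1
  · simp only [ternary]; ring
  · congr 1 <;> ring

/-- Invariance of `Embeds` under `x ↦ x + t y + s z`. -/
theorem Embeds.of_shift {a b c p q r t s : ℤ} {T}
    (h : Embeds a (b + a * t ^ 2 + r * t) (c + a * s ^ 2 + q * s)
      (p + 2 * a * (t * s) + r * s + q * t) (q + 2 * a * s) (r + 2 * a * t) T) :
    Embeds a b c p q r T := by
  obtain ⟨u₁, u₂, u₃, v₁, v₂, v₃, w₁, w₂, w₃, h⟩ := h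
  refine ⟨u₁, u₂, u₃, v₁ - t * u₁, v₂ - t * u₂, v₃ - t * u₃,
    w₁ - s * u₁, w₂ - s * u₂, w₃ - s * u₃, fun x y z => ?_⟩
  have h2 := h (x - t * y - s * z) y z
  convert h2 using 1
  · simp only [ternary]; ring
  · congr 1 <;> ring

theorem Embeds.of_swap {a b c p q r : ℤ} {T} (h : Embeds b a c q p r T) :
    Embeds a b c p q r T := by
  obtain ⟨u₁, u₂, u₃, v₁, v₂, v₃, w₁, w₂, w₃, h⟩ := h
  refine ⟨v₁, v₂, v₃, u₁, u₂, u₃, w₁, w₂, w₃, fun x y z => ?_⟩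
  have h2 := h y x z
  convert h2 using 1
  · simp only [ternary]; ring
  · congr 1 <;> ring

/-- A reduced binary form `(A, B, C)` satisfies `3 A² ≤ 4 (AC - B²)`. -/
theorem reduced_bound {A B C : ℤ} (hA : 0 ≤ A) (hAC : A ≤ C) (hB : 2 * |B| ≤ A) :
    3 * A ^ 2 ≤ 4 * (A * C - B ^ 2) := by
  have hB2 : 4 * B ^ 2 ≤ A ^ 2 := by
    rw [← sq_abs B]
    nlinarith [abs_nonneg B]
  nlinarith

/-- The bounds `3 a² ≤ A` and `3 A² ≤ 16 a Δ ≤ 96 a` on a reduced ternary form, where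
`A = 4ab - r²`, leave only `a = 1`. -/
theorem leading_eq_one {a b r B C Δ : ℤ} (ha : 0 < a) (hba : a ≤ b) (hr : |r| ≤ a)
    (hAC : 4 * a * b - r ^ 2 ≤ C) (hB : 2 * |B| ≤ 4 * a * b - r ^ 2)
    (hdisc : (4 * a * b - r ^ 2) * C - B ^ 2 = 4 * a * Δ) (hΔ : Δ ≤ 6) : a = 1 := by
  have hr2 : r ^ 2 ≤ a ^ 2 := sq_le_sq' (by linarith [(abs_le.1 hr).1]) (abs_le.1 hr).2
  have hA3 : 3 * a ^ 2 ≤ 4 * a * b - r ^ 2 := by nlinarith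
  have hA2 := reduced_bound (by nlinarith) hAC hB
  rw [hdisc] at hA2
  by_contra h
  have ha2 : 2 ≤ a := by omega
  have h5 : 3 * (3 * a ^ 2) ^ 2 ≤ 4 * (4 * a * Δ) := le_trans (by gcongr) hA2
  have h6 : 4 * (4 * a * Δ) ≤ 96 * a := by nlinarith
  have h7 : 27 * a ^ 3 ≤ 96 := by
    have : a * (27 * a ^ 3) ≤ a * 96 := by nlinarith
    exact le_of_mul_le_mul_left this ha
  have h8 : 2 ^ 3 ≤ a ^ 3 := by gcongr
  omega

/-- Hermite reduction of positive definite ternary forms of half-discriminant `0 < Δ ≤ 6`. A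
predicate `P` on the coefficients that can be pulled back along the elementary changes of variables
(`SL₂(ℤ)` acting on `y, z`, shifts of `x`, the swap of `x` and `y`) holds for all of them as soon
as it holds for the reduced ones, whose leading coefficient is necessarily `1`. The descent is on
the leading coefficient. -/
theorem ternary_reduction {Δ : ℤ} {P : ℤ → ℤ → ℤ → ℤ → ℤ → ℤ → Prop} (hΔ0 : 0 < Δ) (hΔ : Δ ≤ 6)
    (hsl2 : ∀ a b c p q r α β γ δ : ℤ, α * δ - β * γ = 1 →
      P a (b * α ^ 2 + c * γ ^ 2 + p * (α * γ)) (b * β ^ 2 + c * δ ^ 2 + p * (β * δ))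
        (2 * b * (α * β) + 2 * c * (γ * δ) + p * (α * δ + β * γ)) (q * δ + r * β)
        (r * α + q * γ) → P a b c p q r)
    (hshift : ∀ a b c p q r t s : ℤ,
      P a (b + a * t ^ 2 + r * t) (c + a * s ^ 2 + q * s)
        (p + 2 * a * (t * s) + r * s + q * t) (q + 2 * a * s) (r + 2 * a * t) → P a b c p q r)
    (hswap : ∀ a b c p q r : ℤ, P b a c q p r → P a b c p q r)
    (hred : ∀ b c p q r : ℤ, |r| ≤ 1 → |q| ≤ 1 → 0 < 4 * b - r ^ 2 →
      4 * b - r ^ 2 ≤ 4 * c - q ^ 2 → 2 * |2 * p - q * r| ≤ 4 * b - r ^ 2 →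
      (4 * b - r ^ 2) * (4 * c - q ^ 2) - (2 * p - q * r) ^ 2 = 4 * Δ → P 1 b c p q r)
    (n : ℕ) : ∀ a b c p q r : ℤ, a.toNat = n → 0 < a → 0 < 4 * a * b - r ^ 2 →
      4 * a * b * c + p * q * r - a * p ^ 2 - b * q ^ 2 - c * r ^ 2 = Δ → P a b c p q r := by
  induction n using Nat.strong_induction_on with
  | _ n ih =>
    intro a b c p q r hn ha hA hdet
    have haΔ : 0 < 4 * a * Δ := by positivity
    obtain ⟨α, β, γ, δ, h1, h2, h3, h4⟩ := binary_reduction _ (4 * a * b - r ^ 2)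
      (2 * a * p - q * r) (4 * a * c - q ^ 2) rfl hA
      (by
        have : (4 * a * b - r ^ 2) * (4 * a * c - q ^ 2) - (2 * a * p - q * r) ^ 2 = 4 * a * Δ := by
          rw [← hdet]; ring
        linarith)
    apply hsl2 a b c p q r α β γ δ h1
    have hdet' : 4 * a * (b * α ^ 2 + c * γ ^ 2 + p * (α * γ)) *
        (b * β ^ 2 + c * δ ^ 2 + p * (β * δ)) +
        (2 * b * (α * β) + 2 * c * (γ * δ) + p * (α * δ + β * γ)) * (q * δ + r * β) *
        (r * α + q * γ) - a * (2 * b * (α * β) + 2 * c * (γ * δ) + p * (α * δ + β * γ)) ^ 2 -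
        (b * α ^ 2 + c * γ ^ 2 + p * (α * γ)) * (q * δ + r * β) ^ 2 -
        (b * β ^ 2 + c * δ ^ 2 + p * (β * δ)) * (r * α + q * γ) ^ 2 = Δ := by
      rw [← hdet]
      linear_combination (4 * a * b * c + p * q * r - a * p ^ 2 - b * q ^ 2 - c * r ^ 2) *
        (α * δ - β * γ + 1) * h1
    have e1 : (4 * a * b - r ^ 2) * α ^ 2 + 2 * (2 * a * p - q * r) * (α * γ) +
        (4 * a * c - q ^ 2) * γ ^ 2 =
        4 * a * (b * α ^ 2 + c * γ ^ 2 + p * (α * γ)) - (r * α + q * γ) ^ 2 := by ring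
    have e2 : (4 * a * b - r ^ 2) * β ^ 2 + 2 * (2 * a * p - q * r) * (β * δ) +
        (4 * a * c - q ^ 2) * δ ^ 2 =
        4 * a * (b * β ^ 2 + c * δ ^ 2 + p * (β * δ)) - (q * δ + r * β) ^ 2 := by ring
    have e3 : (4 * a * b - r ^ 2) * (α * β) + (2 * a * p - q * r) * (α * δ + β * γ) +
        (4 * a * c - q ^ 2) * (γ * δ) =
        2 * a * (2 * b * (α * β) + 2 * c * (γ * δ) + p * (α * δ + β * γ)) -
          (q * δ + r * β) * (r * α + q * γ) := by ring
    rw [e1] at h2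
    rw [e1, e2] at h3
    rw [e1, e3] at h4
    generalize b * α ^ 2 + c * γ ^ 2 + p * (α * γ) = b₁ at *
    generalize b * β ^ 2 + c * δ ^ 2 + p * (β * δ) = c₁ at *
    generalize 2 * b * (α * β) + 2 * c * (γ * δ) + p * (α * δ + β * γ) = p₁ at *
    generalize q * δ + r * β = q₁ at *
    generalize r * α + q * γ = r₁ at *
    obtain ⟨t, ht⟩ := exists_shift ha r₁
    obtain ⟨s, hs⟩ := exists_shift ha q₁
    apply hshift a b₁ c₁ p₁ q₁ r₁ t s
    have hdet2 : 4 * a * (b₁ + a * t ^ 2 + r₁ * t) * (c₁ + a * s ^ 2 + q₁ * s) +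
        (p₁ + 2 * a * (t * s) + r₁ * s + q₁ * t) * (q₁ + 2 * a * s) * (r₁ + 2 * a * t) -
        a * (p₁ + 2 * a * (t * s) + r₁ * s + q₁ * t) ^ 2 -
        (b₁ + a * t ^ 2 + r₁ * t) * (q₁ + 2 * a * s) ^ 2 -
        (c₁ + a * s ^ 2 + q₁ * s) * (r₁ + 2 * a * t) ^ 2 = Δ := by
      rw [← hdet']; ring
    have e1 : 4 * a * b₁ - r₁ ^ 2 =
        4 * a * (b₁ + a * t ^ 2 + r₁ * t) - (r₁ + 2 * a * t) ^ 2 := by ring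
    have e2 : 4 * a * c₁ - q₁ ^ 2 =
        4 * a * (c₁ + a * s ^ 2 + q₁ * s) - (q₁ + 2 * a * s) ^ 2 := by ring
    have e3 : 2 * a * p₁ - q₁ * r₁ = 2 * a * (p₁ + 2 * a * (t * s) + r₁ * s + q₁ * t) -
        (q₁ + 2 * a * s) * (r₁ + 2 * a * t) := by ring
    rw [e1] at h2
    rw [e1, e2] at h3
    rw [e1, e3] at h4
    clear hdet' e1 e2 e3
    generalize b₁ + a * t ^ 2 + r₁ * t = b₂ at *
    generalize c₁ + a * s ^ 2 + q₁ * s = c₂ at *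
    generalize p₁ + 2 * a * (t * s) + r₁ * s + q₁ * t = p₂ at *
    generalize q₁ + 2 * a * s = q₂ at *
    generalize r₁ + 2 * a * t = r₂ at *
    have hb0 : 0 < b₂ := by
      by_contra h
      nlinarith [sq_nonneg r₂]
    by_cases hba : b₂ < a
    · apply hswap
      refine ih b₂.toNat (by omega) b₂ a c₂ q₂ p₂ r₂ rfl hb0 ?_ ?_
      · linarith
      · rw [← hdet2]; ring
    · push Not at hba
      have hdisc : (4 * a * b₂ - r₂ ^ 2) * (4 * a * c₂ - q₂ ^ 2) - (2 * a * p₂ - q₂ * r₂) ^ 2 =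
          4 * a * Δ := by
        rw [← hdet2]; ring
      have ha1 : a = 1 := leading_eq_one ha hba ht h3 h4 hdisc hΔ
      subst ha1
      apply hred b₂ c₂ p₂ q₂ r₂ ht hs
      · linarith
      · linarith
      · simpa using h4
      · simpa using hdisc

/-- The reduced forms with leading coefficient `1` and half-discriminant `Δ ∈ {3, 6}`. -/
theorem reduced_cases {b c p q r Δ : ℤ} (hΔ : Δ = 3 ∨ Δ = 6) (hr : |r| ≤ 1) (hq : |q| ≤ 1)
    (h1 : 0 < 4 * b - r ^ 2) (h2 : 4 * b - r ^ 2 ≤ 4 * c - q ^ 2)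
    (h3 : 2 * |2 * p - q * r| ≤ 4 * b - r ^ 2)
    (h4 : (4 * b - r ^ 2) * (4 * c - q ^ 2) - (2 * p - q * r) ^ 2 = 4 * Δ) :
    b = 1 ∧ (r ^ 2 = 1 ∧ p = 0 ∧ q = 0 ∧ 3 * c = Δ ∨
      r = 0 ∧ q = 0 ∧ p ^ 2 = 1 ∧ c = 1 ∧ Δ = 3 ∨
      r = 0 ∧ q ^ 2 = 1 ∧ p ^ 2 = 1 ∧ c = 2 ∧ Δ = 6) := by
  obtain ⟨hr1, hr2⟩ := abs_le.1 hr
  obtain ⟨hq1, hq2⟩ := abs_le.1 hq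
  have hA := reduced_bound h1.le h2 h3
  rw [h4] at hA
  have hA5 : 4 * b - r ^ 2 ≤ 5 := by
    by_contra h
    have : 6 ≤ 4 * b - r ^ 2 := by omega
    have : 6 ^ 2 ≤ (4 * b - r ^ 2) ^ 2 := by gcongr
    omega
  have hr3 : r ^ 2 ≤ 1 := by nlinarith
  have hb : b = 1 := by
    have := sq_nonneg r
    omega
  subst hb
  refine ⟨rfl, ?_⟩
  have hp := abs_le.1 (show |2 * p - q * r| ≤ 2 by nlinarith [sq_nonneg r])
  obtain ⟨hp1, hp2⟩ := hp
  have hqr : |q * r| ≤ 1 := by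
    rw [abs_mul]
    exact mul_le_one₀ hq (abs_nonneg r) hr
  obtain ⟨hqr1, hqr2⟩ := abs_le.1 hqr
  have hp3 : -1 ≤ p := by omega
  have hp4 : p ≤ 1 := by omega
  clear hA hr hq hqr
  have h5 := le_abs_self (2 * p - q * r)
  have h6 := neg_le_abs (2 * p - q * r)
  obtain rfl | rfl | rfl : r = -1 ∨ r = 0 ∨ r = 1 := by omega
  all_goals obtain rfl | rfl | rfl : q = -1 ∨ q = 0 ∨ q = 1 := by omega
  all_goals obtain rfl | rfl | rfl : p = -1 ∨ p = 0 ∨ p = 1 := by omega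
  all_goals omega

theorem embeds_T₁ {a b c p q r : ℤ} (ha : 0 < a) (hA : 0 < 4 * a * b - r ^ 2)
    (hdet : 4 * a * b * c + p * q * r - a * p ^ 2 - b * q ^ 2 - c * r ^ 2 = 3) :
    Embeds a b c p q r T₁ := by
  refine ternary_reduction (Δ := 3) (P := fun a b c p q r => Embeds a b c p q r T₁)
    (by norm_num) (by norm_num) (fun _ _ _ _ _ _ _ _ _ _ h1 h => h.of_sl2 h1)
    (fun _ _ _ _ _ _ _ _ h => h.of_shift) (fun _ _ _ _ _ _ h => h.of_swap) ?_ _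
    a b c p q r rfl ha hA hdet
  intro b c p q r hr hq h1 h2 h3 h4
  obtain ⟨rfl, ⟨hr, rfl, rfl, hc⟩ | ⟨rfl, rfl, hp, rfl, -⟩ | ⟨-, -, -, -, h⟩⟩ :=
    reduced_cases (Or.inl rfl) hr hq h1 h2 h3 h4
  · obtain rfl : c = 1 := by omega
    refine ⟨0, 1, 0, 0, 0, r, 1, 0, 0, fun x y z => ?_⟩
    simp only [ternary, T₁]
    linear_combination -y ^ 2 * hr
  · refine ⟨1, 0, 0, 0, 1, 0, 0, 0, p, fun x y z => ?_⟩
    simp only [ternary, T₁]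
    linear_combination -z ^ 2 * hp
  · omega

theorem embeds_T₂ {a b c p q r : ℤ} (ha : 0 < a) (hA : 0 < 4 * a * b - r ^ 2)
    (hdet : 4 * a * b * c + p * q * r - a * p ^ 2 - b * q ^ 2 - c * r ^ 2 = 6) :
    Embeds a b c p q r T₂ ∨ Embeds a b c p q r T₂' := by
  refine ternary_reduction (Δ := 6)
    (P := fun a b c p q r => Embeds a b c p q r T₂ ∨ Embeds a b c p q r T₂')
    (by norm_num) (by norm_num)
    (fun _ _ _ _ _ _ _ _ _ _ h1 h => h.imp (fun h => h.of_sl2 h1) (fun h => h.of_sl2 h1))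
    (fun _ _ _ _ _ _ _ _ h => h.imp (fun h => h.of_shift) (fun h => h.of_shift))
    (fun _ _ _ _ _ _ h => h.imp (fun h => h.of_swap) (fun h => h.of_swap)) ?_ _
    a b c p q r rfl ha hA hdet
  intro b c p q r hr hq h1 h2 h3 h4
  obtain ⟨rfl, ⟨hr, rfl, rfl, hc⟩ | ⟨-, -, -, -, h⟩ | ⟨rfl, hq, hp, rfl, -⟩⟩ :=
    reduced_cases (Or.inr rfl) hr hq h1 h2 h3 h4
  · obtain rfl : c = 2 := by omega
    refine Or.inl ⟨0, 1, 0, 0, 0, r, 1, 0, 0, fun x y z => ?_⟩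
    simp only [ternary, T₂]
    linear_combination -y ^ 2 * hr
  · omega
  · refine Or.inr ⟨q, 0, 0, 0, p, 0, 0, 0, 1, fun x y z => ?_⟩
    simp only [ternary, T₂']
    linear_combination -x ^ 2 * hq - y ^ 2 * hp

/-- If a form `a x² + b y² + c z² + q xz + r xy` of half-discriminant `6` has a binary minor
`4ab - r² ≡ 2 (mod 3)`, or represents a number `c ≡ 3 (mod 9)`, then it is not in the class of
`T₂'`; hence `T₂` represents `c`. -/
theorem T₂_of_minor {a b c q r : ℤ} (ha : 0 < a) (hA : 0 < 4 * a * b - r ^ 2)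
    (hdet : c * (4 * a * b - r ^ 2) - b * q ^ 2 = 6)
    (h : (4 * a * b - r ^ 2) % 3 = 2 ∨ c % 9 = 3) : ∃ x y z, c = T₂ x y z := by
  obtain ⟨u₁, u₂, u₃, v₁, v₂, v₃, w₁, w₂, w₃, he⟩ | ⟨u₁, u₂, u₃, v₁, v₂, v₃, w₁, w₂, w₃, he⟩ :=
    embeds_T₂ (p := 0) (c := c) (q := q) ha hA (by rw [← hdet]; ring)
  · have h3 := he 0 0 1
    simp only [ternary] at h3
    exact ⟨_, _, _, by linear_combination h3⟩
  exfalso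
  rcases h with h | h
  · have h1 := he 1 0 0
    have h2 := he 0 1 0
    have h3 := he 1 1 0
    simp only [ternary, T₂', mul_zero, mul_one, add_zero, zero_add, one_pow, ne_eq,
      OfNat.ofNat_ne_zero, not_false_eq_true, zero_pow] at h1 h2 h3
    have hr : r = 2 * (u₁ * v₁) + 2 * (u₂ * v₂) + 4 * (u₃ * v₃) + u₁ * v₃ + u₃ * v₁ +
        u₂ * v₃ + u₃ * v₂ := by linear_combination h3 - h1 - h2
    -- The minors of `T₂'` are the values of its adjoint form at `u × v`, which is a square mod 3.
    obtain ⟨X, hX⟩ : ∃ X, X = u₂ * v₃ - u₃ * v₂ := ⟨_, rfl⟩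
    obtain ⟨Y, hY⟩ : ∃ Y, Y = u₃ * v₁ - u₁ * v₃ := ⟨_, rfl⟩
    obtain ⟨Z, hZ⟩ : ∃ Z, Z = u₁ * v₂ - u₂ * v₁ := ⟨_, rfl⟩
    have key : 4 * a * b - r ^ 2 =
        (X + Y + Z) ^ 2 + 3 * (2 * X ^ 2 + 2 * Y ^ 2 + Z ^ 2 - 2 * X * Z - 2 * Y * Z) := by
      rw [hr, h1, h2, hX, hY, hZ]; ring
    rw [key, Int.add_mul_emod_self_left, pow_two, Int.mul_emod] at h
    have : (X + Y + Z) % 3 = 0 ∨ (X + Y + Z) % 3 = 1 ∨ (X + Y + Z) % 3 = 2 := by omega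
    rcases this with h' | h' | h' <;> rw [h'] at h <;> norm_num at h
  · have h3 := he 0 0 1
    simp only [ternary, T₂', mul_zero, mul_one, add_zero, zero_add, one_pow, ne_eq,
      OfNat.ofNat_ne_zero, not_false_eq_true, zero_pow] at h3
    have h4 : ((c : ℤ) : ZMod 9) = ((3 : ℤ) : ZMod 9) :=
      (ZMod.intCast_eq_intCast_iff' c 3 9).2 (by simpa using h)
    rw [h3] at h4
    push_cast at h4
    have : ∀ x y z : ZMod 9, x ^ 2 + y ^ 2 + 2 * z ^ 2 + x * z + y * z ≠ 3 := by decide +kernel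
    exact this _ _ _ h4

/-- `T₁` is the only class of half-discriminant `3`, so it represents the last diagonal
coefficient `c` of the given form. -/
theorem T₁_of_minor {a b c q r : ℤ} (ha : 0 < a) (hA : 0 < 4 * a * b - r ^ 2)
    (hdet : c * (4 * a * b - r ^ 2) - b * q ^ 2 = 3) : ∃ x y z, c = T₁ x y z := by
  obtain ⟨u₁, u₂, u₃, v₁, v₂, v₃, w₁, w₂, w₃, he⟩ :=
    embeds_T₁ (p := 0) (c := c) (q := q) ha hA (by rw [← hdet]; ring)
  have h3 := he 0 0 1
  simp only [ternary] at h3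
  exact ⟨_, _, _, by linear_combination h3⟩

/-! ### Primes in progressions and Jacobi symbols -/

/-- Dirichlet's theorem, in the form of primes among the values of `A j + B`. -/
theorem exists_prime_linear {A B : ℤ} (hA : 0 < A) (h : IsCoprime B A) :
    ∃ p j : ℕ, p.Prime ∧ 3 < p ∧ (p : ℤ) = A * j + B := by
  lift A to ℕ using hA.le
  obtain ⟨p, hp, hpp, hmod⟩ :=
    Nat.forall_exists_prime_gt_and_zmodEq (3 + B.toNat) (by omega : A ≠ 0) h
  obtain ⟨j, hj⟩ := hmod.symm.dvd
  have hj0 : 0 ≤ j := by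
    by_contra hneg
    have : (A : ℤ) * j < 0 := mul_neg_of_pos_of_neg hA (by omega)
    omega
  lift j to ℕ using hj0
  exact ⟨p, j, hpp, by omega, by omega⟩

theorem coprime_two {B : ℤ} (h2 : B % 2 = 1) : IsCoprime B 2 := ⟨1, -(B / 2), by omega⟩

theorem coprime_six_mul {B u : ℤ} (h2 : B % 2 = 1) (h3 : B % 3 ≠ 0) (hu : IsCoprime B u) :
    IsCoprime B (6 * u) := by
  have c3 : IsCoprime B 3 := by
    have h : B % 3 = 1 ∨ B % 3 = 2 := by omega
    rcases h with h | h
    · exact ⟨1, -(B / 3), by omega⟩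
    · exact ⟨-1, B / 3 + 1, by omega⟩
  have := ((coprime_two h2).mul_right c3).mul_right hu
  norm_num at this
  exact this

theorem coprime_twenty_four_mul {B u : ℤ} (h2 : B % 2 = 1) (h3 : B % 3 ≠ 0)
    (hu : IsCoprime B u) : IsCoprime B (24 * u) := by
  have := coprime_six_mul h2 h3 ((coprime_two h2).mul_right ((coprime_two h2).mul_right hu))
  convert this using 1
  ring

theorem coprime_three {u : ℤ} (h3 : u % 3 ≠ 0) : IsCoprime 3 u := by
  have h : u % 3 = 1 ∨ u % 3 = 2 := by omega
  rcases h with h | h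
  · exact ⟨-(u / 3), 1, by omega⟩
  · exact ⟨u / 3 + 1, -1, by omega⟩

theorem exists_sq_of_jacobi {p : ℕ} (hp : p.Prime) {k : ℤ} (h : jacobiSym (-k) p = 1) :
    ∃ r : ℤ, (p : ℤ) ∣ r ^ 2 + k := by
  have : Fact p.Prime := ⟨hp⟩
  obtain ⟨s, hs⟩ := ZMod.isSquare_of_jacobiSym_eq_one h
  refine ⟨s.valMinAbs, ?_⟩
  rw [← ZMod.intCast_zmod_eq_zero_iff_dvd]
  push_cast at hs ⊢
  linear_combination -hs

/-- Moves a root `r` modulo `p` to a root in a prescribed class modulo `N`, where `p² ≡ 1`. -/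
theorem exists_sq_crt {p k r N ρ : ℤ} (hr : p ∣ r ^ 2 + k) (hN : N ∣ p ^ 2 - 1)
    (hρ : N ∣ ρ ^ 2 + k) : ∃ r', N * p ∣ r' ^ 2 + k ∧ N ∣ r' - ρ := by
  obtain ⟨t, ht⟩ := hN
  have hcop : IsCoprime N p := ⟨-t, p, by linear_combination ht⟩
  have e : r + p ^ 2 * (ρ - r) = ρ + N * (t * (ρ - r)) := by linear_combination (ρ - r) * ht
  refine ⟨r + p ^ 2 * (ρ - r), hcop.mul_dvd ?_ ?_, ⟨t * (ρ - r), by linear_combination e⟩⟩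
  · rw [e]
    obtain ⟨s, hs⟩ := hρ
    exact ⟨s + 2 * ρ * (t * (ρ - r)) + N * (t * (ρ - r)) ^ 2, by linear_combination hs⟩
  · obtain ⟨s, hs⟩ := hr
    exact ⟨s + 2 * r * p * (ρ - r) + p ^ 3 * (ρ - r) ^ 2, by linear_combination hs⟩

theorem jacobi_neg_of_one_mod_four {p k : ℕ} (hp : p % 4 = 1) (hk : k % 2 = 1) :
    jacobiSym (-k) p = jacobiSym p k := by
  have hodd : Odd p := Nat.odd_iff.2 (by omega)
  rw [jacobiSym.neg _ hodd, ZMod.χ₄_nat_one_mod_four hp, one_mul,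
    jacobiSym.quadratic_reciprocity_one_mod_four' (Nat.odd_iff.2 hk) hp]

theorem jacobi_neg_of_three_mod_four {p k : ℕ} (hp : p % 4 = 3) (hk : k % 4 = 1) :
    jacobiSym (-k) p = -jacobiSym p k := by
  have hodd : Odd p := Nat.odd_iff.2 (by omega)
  rw [jacobiSym.neg _ hodd, ZMod.χ₄_nat_three_mod_four hp, neg_one_mul,
    jacobiSym.quadratic_reciprocity_one_mod_four hk hodd]

theorem jacobi_neg_disc {p D : ℕ} (hp : p % 2 = 1) (hD : D % 4 = 3) :
    jacobiSym (-D) p = jacobiSym p D := by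
  have hodd : Odd p := Nat.odd_iff.2 hp
  have h : p % 4 = 1 ∨ p % 4 = 3 := by omega
  rcases h with h | h
  · exact jacobi_neg_of_one_mod_four h (by omega)
  · rw [jacobiSym.neg _ hodd, ZMod.χ₄_nat_three_mod_four h,
      jacobiSym.quadratic_reciprocity_three_mod_four hD h]
    ring

theorem jacobi_neg_three {k : ℕ} (hk : k % 2 = 1) :
    jacobiSym (-3) k = jacobiSym (-3) (k % 12) :=
  jacobiSym.mod_right (-3) (Nat.odd_iff.2 hk)

/-! ### Numbers represented by the ternary forms -/

/-- `x² + y² + yz + z²` represents every positive integer prime to `3`. -/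
theorem T₁_represents {m : ℤ} (hm : 0 < m) (h3 : m % 3 ≠ 0) : ∃ x y z, m = T₁ x y z := by
  have hcop : IsCoprime (4 * m - 3) (24 * m) := by
    refine coprime_twenty_four_mul (by omega) (by omega) ?_
    obtain ⟨s, t, hst⟩ := coprime_three h3
    exact ⟨-s, t + 4 * s, by linear_combination hst⟩
  obtain ⟨p, j, hp, hp3, hpj⟩ := exists_prime_linear (by omega) hcop
  obtain ⟨k, hk⟩ : ∃ k : ℕ, k = 6 * j + 1 := ⟨_, rfl⟩
  have hpk : (p : ℤ) = 4 * m * k - 3 := by rw [hpj, hk]; push_cast; ring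
  have hp4 : p % 4 = 1 := by
    have : (p : ℤ) = 4 * (m * k) - 3 := by rw [hpk]; ring
    omega
  have hJ : jacobiSym (-k) p = 1 := by
    rw [jacobi_neg_of_one_mod_four hp4 (by omega)]
    have : jacobiSym p k = jacobiSym (-3) k := by
      apply jacobiSym.mod_left'
      rw [hpk, show 4 * m * (k : ℤ) - 3 = -3 + k * (4 * m) by ring, Int.add_mul_emod_self_left]
    rw [this, jacobi_neg_three (by omega)]
    have h : k % 12 = 1 ∨ k % 12 = 7 := by omega
    rcases h with h | h <;> rw [h] <;> norm_num
  obtain ⟨r, a, hra⟩ := exists_sq_of_jacobi hp hJ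
  have hp0 : (0 : ℤ) < p := by exact_mod_cast hp.pos
  have hk0 : (0 : ℤ) < k := by omega
  have hD : 4 * a * p - (2 * r) ^ 2 = 4 * k := by linear_combination -4 * hra
  refine T₁_of_minor (a := a) (b := p) (q := 1) (r := 2 * r) ?_ (by omega) ?_
  · by_contra h
    nlinarith [sq_nonneg r]
  · rw [hD]; linear_combination -hpk

/-- `2x² + y² + yz + z²` represents every positive odd integer prime to `3`. -/
theorem T₂_odd_coprime {m : ℤ} (hm : 0 < m) (h2 : m % 2 = 1) (h3 : m % 3 ≠ 0) :
    ∃ x y z, m = T₂ x y z := by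
  have hcop : IsCoprime (10 * m - 3) (24 * m) := by
    refine coprime_twenty_four_mul (by omega) (by omega) ?_
    obtain ⟨s, t, hst⟩ := coprime_three h3
    exact ⟨-s, t + 10 * s, by linear_combination hst⟩
  obtain ⟨p, j, hp, hp3, hpj⟩ := exists_prime_linear (by omega) hcop
  obtain ⟨k, hk⟩ : ∃ k : ℕ, k = 12 * j + 5 := ⟨_, rfl⟩
  have hpk : (p : ℤ) = 2 * m * k - 3 := by rw [hpj, hk]; push_cast; ring
  have hp4 : p % 4 = 3 := by
    have : (p : ℤ) = 4 * (6 * m * j + 2 * m) + 2 * m - 3 := by rw [hpj]; ring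
    omega
  have hJ : jacobiSym (-k) p = 1 := by
    rw [jacobi_neg_of_three_mod_four hp4 (by omega)]
    have : jacobiSym p k = jacobiSym (-3) k := by
      apply jacobiSym.mod_left'
      rw [hpk, show 2 * m * (k : ℤ) - 3 = -3 + k * (2 * m) by ring, Int.add_mul_emod_self_left]
    rw [this, jacobi_neg_three (by omega), show k % 12 = 5 by omega]
    norm_num
  obtain ⟨r₀, hr₀⟩ := exists_sq_of_jacobi hp hJ
  have hN : (2 : ℤ) ∣ (p : ℤ) ^ 2 - 1 := by
    rw [show (p : ℤ) ^ 2 - 1 = (p - 1) * (p + 1) by ring]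
    exact Dvd.dvd.mul_right (by omega) _
  obtain ⟨r, ⟨a, hra⟩, -⟩ := exists_sq_crt (ρ := 1) hr₀ hN (by omega)
  have hp0 : (0 : ℤ) < p := by exact_mod_cast hp.pos
  have hk0 : (0 : ℤ) < k := by omega
  have hD : 4 * a * (2 * p) - (2 * r) ^ 2 = 4 * k := by linear_combination -4 * hra
  refine T₂_of_minor (a := a) (b := 2 * p) (q := 1) (r := 2 * r) ?_ (by omega) ?_ (by omega)
  · by_contra h
    nlinarith [sq_nonneg r]
  · rw [hD]; linear_combination -2 * hpk

/-- `2x² + y² + yz + z²` represents `3m` for `m` positive, odd and prime to `3`. -/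
theorem T₂_odd_three_mul {m : ℤ} (hm : 0 < m) (h2 : m % 2 = 1) (h3 : m % 3 ≠ 0) :
    ∃ x y z, 3 * m = T₂ x y z := by
  -- For `m ≡ 2 (mod 3)` the minor is `≡ 2 (mod 3)`; for `m ≡ 1 (mod 3)` one has `3m ≡ 3 (mod 9)`.
  obtain ⟨k₀, hk₀⟩ : ∃ k₀ : ℕ, k₀ = 5 ∧ m % 3 = 2 ∨ k₀ = 9 ∧ m % 3 = 1 := by
    have h : m % 3 = 2 ∨ m % 3 = 1 := by omega
    rcases h with h | h
    · exact ⟨5, Or.inl ⟨rfl, h⟩⟩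
    · exact ⟨9, Or.inr ⟨rfl, h⟩⟩
  have hcop : IsCoprime (2 * m * k₀ - 1) (24 * m) := by
    refine coprime_twenty_four_mul ?_ ?_ ⟨-1, 2 * k₀, by ring⟩
    · rcases hk₀ with ⟨rfl, h⟩ | ⟨rfl, h⟩ <;> push_cast <;> omega
    · rcases hk₀ with ⟨rfl, h⟩ | ⟨rfl, h⟩ <;> push_cast <;> omega
  obtain ⟨p, j, hp, hp3, hpj⟩ := exists_prime_linear (by omega) hcop
  obtain ⟨k, hk⟩ : ∃ k : ℕ, k = 12 * j + k₀ := ⟨_, rfl⟩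
  have hpk : (p : ℤ) = 2 * m * k - 1 := by rw [hpj, hk]; push_cast; ring
  have hk4 : k % 4 = 1 := by omega
  have hp6 : p % 4 = 1 ∧ (p % 6 = 1 ∨ p % 6 = 5) := by
    have : (p : ℤ) = 12 * (2 * m * j) + 2 * m * k₀ - 1 := by rw [hpj]; ring
    rcases hk₀ with ⟨rfl, h⟩ | ⟨rfl, h⟩ <;> push_cast at this <;> omega
  have hJ : jacobiSym (-k) p = 1 := by
    rw [jacobi_neg_of_one_mod_four hp6.1 (by omega)]
    have : jacobiSym p k = jacobiSym (-1) k := by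
      apply jacobiSym.mod_left'
      rw [hpk, show 2 * m * (k : ℤ) - 1 = -1 + k * (2 * m) by ring, Int.add_mul_emod_self_left]
    rw [this, jacobiSym.at_neg_one (Nat.odd_iff.2 (by omega)), ZMod.χ₄_nat_one_mod_four hk4]
  obtain ⟨r₀, hr₀⟩ := exists_sq_of_jacobi hp hJ
  have hN : (6 : ℤ) ∣ (p : ℤ) ^ 2 - 1 := by
    rw [show (p : ℤ) ^ 2 - 1 = (p - 1) * (p + 1) by ring]
    rcases hp6.2 with h | h
    · exact Dvd.dvd.mul_right (by omega) _
    · exact Dvd.dvd.mul_left (by omega) _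
  obtain ⟨r, ⟨a, hra⟩, -⟩ := exists_sq_crt (ρ := k) hr₀ hN (by
    rw [show (k : ℤ) ^ 2 + k = k * (k + 1) by ring]
    have h3 : (3 : ℤ) ∣ k * (k + 1) := by
      rcases hk₀ with ⟨rfl, h⟩ | ⟨rfl, h⟩
      · exact Dvd.dvd.mul_left (by omega) _
      · exact Dvd.dvd.mul_right (by omega) _
    have h2 : (2 : ℤ) ∣ k * (k + 1) := Dvd.dvd.mul_left (by omega) _
    omega)
  have hp0 : (0 : ℤ) < p := by exact_mod_cast hp.pos
  have hk0 : (0 : ℤ) < k := by omega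
  have hD : 4 * a * (6 * p) - (2 * r) ^ 2 = 4 * k := by linear_combination -4 * hra
  refine T₂_of_minor (a := a) (b := 6 * p) (q := 1) (r := 2 * r) ?_ (by omega) ?_ (by omega)
  · by_contra h
    nlinarith [sq_nonneg r]
  · rw [hD]; linear_combination -6 * hpk

/-- `2x² + y² + yz + z²` represents every positive odd integer. -/
theorem T₂_odd (n : ℕ) (h2 : n % 2 = 1) : ∃ x y z, (n : ℤ) = T₂ x y z := by
  induction n using Nat.strong_induction_on with
  | _ n ih =>
    by_cases h3 : n % 3 = 0
    · by_cases h9 : n % 9 = 0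
      · obtain ⟨x, y, z, h⟩ := ih (n / 9) (by omega) (by omega)
        refine ⟨3 * x, 3 * y, 3 * z, ?_⟩
        have e : (n : ℤ) = 9 * (n / 9 : ℕ) := by omega
        rw [e, h]
        simp only [T₂]
        ring
      · obtain ⟨x, y, z, h⟩ := T₂_odd_three_mul (m := (n : ℤ) / 3) (by omega) (by omega) (by omega)
        exact ⟨x, y, z, by omega⟩
    · exact T₂_odd_coprime (by omega) (by omega) (by omega)

/-- The common end of the constructions for `T₂` at `2u`: a prime `p` with `u D - 3 = 2 e² p`
(`e` being half the off-diagonal coefficient) and a suitable odd discriminant `-D`. -/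
theorem T₂_two_mul_of_prime {u e : ℤ} {D p : ℕ} (hp : p.Prime) (hp2 : p % 2 = 1)
    (hD24 : D % 24 = 11) (hpD : u * D - 3 = 2 * e ^ 2 * p)
    (hJ : jacobiSym (2 * e ^ 2 * p) D = -jacobiSym p D) : ∃ x y z, 2 * u = T₂ x y z := by
  have hJ1 : jacobiSym (-D) p = 1 := by
    rw [jacobi_neg_disc hp2 (by omega)]
    have : jacobiSym (2 * e ^ 2 * p) D = jacobiSym (-3) D := by
      apply jacobiSym.mod_left'
      rw [← hpD, show u * (D : ℤ) - 3 = -3 + D * u by ring, Int.add_mul_emod_self_left]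
    rw [← neg_neg (jacobiSym p D), ← hJ, this, jacobi_neg_three (by omega),
      show D % 12 = 11 by omega]
    norm_num
  obtain ⟨r₀, hr₀⟩ := exists_sq_of_jacobi hp hJ1
  -- `r` is taken odd, so that `4 ∣ r² + D`.
  have hN : (4 : ℤ) ∣ (p : ℤ) ^ 2 - 1 := by
    obtain ⟨t, ht⟩ : ∃ t : ℤ, (p : ℤ) = 2 * t + 1 := ⟨p / 2, by omega⟩
    exact ⟨t ^ 2 + t, by rw [ht]; ring⟩
  obtain ⟨r, ⟨a, hra⟩, -⟩ := exists_sq_crt (ρ := 1) hr₀ hN (by omega)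
  have hp0 : (0 : ℤ) < p := by exact_mod_cast hp.pos
  have hD0 : (0 : ℤ) < D := by omega
  have hD : 4 * a * p - r ^ 2 = D := by linear_combination -hra
  refine T₂_of_minor (a := a) (b := p) (q := 2 * e) (r := r) ?_ (by omega) ?_ (by omega)
  · by_contra h
    nlinarith [sq_nonneg r]
  · rw [hD]; linear_combination 2 * hpD

theorem jacobi_two {D : ℕ} (hD : D % 8 = 3) : jacobiSym 2 D = -1 := by
  rw [jacobiSym.mod_right 2 (Nat.odd_iff.2 (by omega))]
  norm_num [hD]

/-- `2x² + y² + yz + z²` represents `2u` for `u ≡ 3 (mod 4)` prime to `3`. -/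
theorem T₂_two_mul_three {u : ℤ} (hu : 0 < u) (h4 : u % 4 = 3) (h3 : u % 3 ≠ 0) :
    ∃ x y z, 2 * u = T₂ x y z := by
  obtain ⟨t, ht⟩ : ∃ t, u = 4 * t + 3 := ⟨u / 4, by omega⟩
  have hcop : IsCoprime (22 * t + 15) (6 * (2 * u)) := by
    refine coprime_six_mul (by omega) (by omega) ((coprime_two (by omega)).mul_right ?_)
    obtain ⟨s, v, hst⟩ := coprime_three h3
    exact ⟨-2 * s, v + 11 * s, by linear_combination hst + 11 * s * ht⟩
  obtain ⟨p, j, hp, hp3, hpj⟩ := exists_prime_linear (by omega) hcop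
  have hp2 : p % 2 = 1 := by
    have := hp.eq_two_or_odd
    omega
  refine T₂_two_mul_of_prime (D := 24 * j + 11) (e := 1) hp hp2 (by omega) ?_ ?_
  · push_cast
    linear_combination -2 * hpj + 11 * ht
  · rw [one_pow, mul_one, jacobiSym.mul_left, jacobi_two (by omega)]
    ring

/-- `2x² + y² + yz + z²` represents `2u` for `u ≡ 1 (mod 8)` prime to `3`. -/
theorem T₂_two_mul_one {u : ℤ} (hu : 0 < u) (h8 : u % 8 = 1) (h3 : u % 3 ≠ 0) :
    ∃ x y z, 2 * u = T₂ x y z := by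
  -- `D₀` is chosen so that `u D₀ ≡ 11 (mod 16)`, which makes `p = (u D - 3) / 8` odd.
  obtain ⟨D₀, B, hD₀, hB2, hB⟩ : ∃ (D₀ : ℕ) (B : ℤ), D₀ % 24 = 11 ∧ B % 2 = 1 ∧
      u * D₀ - 3 = 8 * B := by
    have h : u % 16 = 1 ∨ u % 16 = 9 := by omega
    rcases h with h | h
    · exact ⟨11, (u * 11 - 3) / 8, by omega, by omega, by push_cast; omega⟩
    · exact ⟨35, (u * 35 - 3) / 8, by omega, by omega, by push_cast; omega⟩
  have hcop : IsCoprime B (6 * u) := by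
    refine coprime_six_mul hB2 ?_ ?_
    · intro h
      have h5 : (3 : ℤ) ∣ u * D₀ := by omega
      rcases Int.prime_three.dvd_or_dvd h5 with h5 | h5 <;> omega
    · obtain ⟨s, v, hst⟩ := coprime_three h3
      exact ⟨-8 * s, v + D₀ * s, by linear_combination hst + s * hB⟩
  obtain ⟨p, j, hp, hp3, hpj⟩ := exists_prime_linear (by omega) hcop
  have hp2 : p % 2 = 1 := by
    have := hp.eq_two_or_odd
    omega
  refine T₂_two_mul_of_prime (D := 48 * j + D₀) (e := 2) hp hp2 (by omega) ?_ ?_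
  · push_cast
    linear_combination -8 * hpj + hB
  · rw [show (2 : ℤ) * 2 ^ 2 = 2 ^ 3 by norm_num, jacobiSym.mul_left, jacobiSym.pow_left,
      jacobi_two (by omega)]
    ring

/-! ### The quaternary forms -/

/-- `n` is of the form `a x² + b y² + (z² + z w + w²)` with integral `x, y, z, w`. -/
def Represents (a b n : ℕ) : Prop :=
  ∃ x y z w : ℤ, (n : ℤ) = a * x ^ 2 + b * y ^ 2 + (z ^ 2 + z * w + w ^ 2)

theorem represents_of_T₁ {b n : ℕ} (y : ℕ) (hpos : b * y ^ 2 < n)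
    (h3 : ((n : ℤ) - b * y ^ 2) % 3 ≠ 0) : Represents 1 b n := by
  zify at hpos
  obtain ⟨x, z, w, h⟩ := T₁_represents (m := n - b * y ^ 2) (by linarith) h3
  exact ⟨x, y, z, w, by rw [T₁] at h; push_cast; linear_combination h⟩

theorem represents_of_T₂ {b n : ℕ} (y : ℤ) (h : ∃ x z w, (n : ℤ) - b * y ^ 2 = T₂ x z w) :
    Represents 2 b n := by
  obtain ⟨x, z, w, h⟩ := h
  exact ⟨x, y, z, w, by rw [T₂] at h; push_cast; linear_combination h⟩

theorem Represents.four_mul {a b n : ℕ} (h : Represents a b n) : Represents a b (4 * n) := by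
  obtain ⟨x, y, z, w, h⟩ := h
  exact ⟨2 * x, 2 * y, 2 * z, 2 * w, by push_cast; linear_combination 4 * h⟩

/-- Since `3 (z² + zw + w²)` is again of the shape `z² + zw + w²`, a value of
`a x² + 3c y² + …` times `3` is a value of `c (3y)² + 3a x² + …`. -/
theorem Represents.three_mul {a c n : ℕ} (h : Represents a (3 * c) n) :
    Represents c (3 * a) (3 * n) := by
  obtain ⟨x, y, z, w, h⟩ := h
  exact ⟨3 * y, x, z - w, z + 2 * w, by push_cast at h ⊢; linear_combination 3 * h⟩

/-- A finite search for a representation of `n` by `2x² + by² + (z² + zw + w²)`. -/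
def smallCheck (b n : ℕ) : Bool :=
  (List.range 4).any fun y => (List.range 14).any fun x =>
    (2 * x ^ 2 + b * y ^ 2 ≤ n) && (List.range 11).any fun w => (List.range 20).any fun z =>
      (2 * x ^ 2 + b * y ^ 2 + (z ^ 2 + z * w + w ^ 2)) == n

theorem represents_of_smallCheck {b n : ℕ} (h : smallCheck b n = true) : Represents 2 b n := by
  simp only [smallCheck, List.any_eq_true, Bool.and_eq_true, beq_iff_eq] at h
  obtain ⟨y, -, x, -, -, w, -, z, -, h⟩ := h
  exact ⟨x, y, z, w, by exact_mod_cast h.symm⟩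

theorem one_universal_of_coprime {b : ℕ} (hb : b % 3 ≠ 0) (hb5 : b ≤ 5) (n : ℕ) :
    Represents 1 b n := by
  by_cases h3 : n % 3 = 0
  · by_cases h0 : n = 0
    · exact ⟨0, 0, 0, 0, by simp [h0]⟩
    by_cases h : n = 3
    · exact ⟨0, 0, 1, 1, by rw [h]; norm_num⟩
    · exact represents_of_T₁ 1 (by omega) (by push_cast; omega)
  · exact represents_of_T₁ 0 (by omega) (by push_cast; omega)

theorem one_three_universal (n : ℕ) : Represents 1 3 n := by
  induction n using Nat.strong_induction_on with
  | _ n ih =>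
    by_cases h0 : n = 0
    · exact ⟨0, 0, 0, 0, by simp [h0]⟩
    by_cases h3 : n % 3 = 0
    · have := Represents.three_mul (c := 1) (ih (n / 3) (by omega))
      rwa [Nat.mul_div_cancel' (by omega)] at this
    · exact represents_of_T₁ 0 (by omega) (by push_cast; omega)

theorem two_universal_of_odd {b : ℕ} (hb : b % 2 = 1) (hb3 : 3 ≤ b) (hb9 : b ≤ 9) (n : ℕ) :
    Represents 2 b n := by
  by_cases h2 : n % 2 = 1
  · exact represents_of_T₂ 0 (by simpa using T₂_odd n h2)
  by_cases hn : b ≤ n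
  · refine represents_of_T₂ 1 ?_
    have := T₂_odd (n - b) (by omega)
    push_cast [hn] at this
    simpa using this
  · obtain rfl | rfl | rfl | rfl : b = 3 ∨ b = 5 ∨ b = 7 ∨ b = 9 := by omega
    all_goals
      obtain ⟨k, rfl⟩ : ∃ k, n = 2 * k := ⟨n / 2, by omega⟩
      have hk : k < 5 := by omega
      interval_cases k <;> first | omega | exact represents_of_smallCheck (by decide +kernel)

theorem one_six_universal (n : ℕ) : Represents 1 6 n := by
  by_cases h3 : n % 3 = 0
  · have := Represents.three_mul (c := 1) (two_universal_of_odd (b := 3) rfl le_rfl (by norm_num)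
      (n / 3))
    rwa [Nat.mul_div_cancel' (by omega)] at this
  · exact represents_of_T₁ 0 (by omega) (by push_cast; omega)

/-- For `b = 2c` and `n = 2u`, a `y` making `u - c y²` positive, odd, prime to `3` and `≢ 5 (mod 8)`
gives a representation. -/
theorem represents_two_mul {c u : ℕ} (y : ℕ) (hpos : c * y ^ 2 < u)
    (h2 : ((u : ℤ) - c * y ^ 2) % 8 ∈ ({1, 3, 7} : Set ℤ))
    (h3 : ((u : ℤ) - c * y ^ 2) % 3 ≠ 0) : Represents 2 (2 * c) (2 * u) := by
  refine represents_of_T₂ y ?_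
  zify at hpos
  have key : ∃ x z w, 2 * ((u : ℤ) - c * y ^ 2) = T₂ x z w := by
    by_cases h : ((u : ℤ) - c * y ^ 2) % 8 = 1
    · exact T₂_two_mul_one (by linarith) h h3
    · simp only [Set.mem_insert_iff, Set.mem_singleton_iff] at h2
      exact T₂_two_mul_three (by linarith) (by omega) h3
  convert key using 7
  push_cast
  ring

theorem two_even_of_odd {c u : ℕ} (hc : 1 ≤ c) (hc5 : c ≤ 5) (hu : u % 2 = 1)
    (hc3 : c = 3 → u % 3 ≠ 0) : Represents 2 (2 * c) (2 * u) := by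
  by_cases h5 : u % 8 = 5
  · by_cases hce : c % 2 = 0
    · by_cases h3 : (u + 2 * c) % 3 = 0
      · by_cases hlt : c * 3 ^ 2 < u
        · exact represents_two_mul 3 hlt (by simp; omega) (by omega)
        · obtain ⟨t, ht⟩ : ∃ t, u = 8 * t + 5 := ⟨u / 8, by omega⟩
          subst ht
          have : t < 5 := by omega
          obtain rfl | rfl : c = 2 ∨ c = 4 := by omega
          all_goals
            interval_cases t <;>
              first | omega | exact represents_of_smallCheck (by decide +kernel)
      · by_cases hlt : c * 1 ^ 2 < u
        · exact represents_two_mul 1 hlt (by simp; omega) (by omega)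
        · omega
    · by_cases h3 : (u + 2 * c) % 3 = 0
      · by_cases hlt : c * 6 ^ 2 < u
        · exact represents_two_mul 6 hlt (by simp; omega) (by omega)
        · obtain ⟨t, ht⟩ : ∃ t, u = 8 * t + 5 := ⟨u / 8, by omega⟩
          subst ht
          have : t < 23 := by omega
          obtain rfl | rfl | rfl : c = 1 ∨ c = 3 ∨ c = 5 := by omega
          all_goals
            interval_cases t <;>
              first | omega | exact represents_of_smallCheck (by decide +kernel)
      · by_cases hlt : c * 2 ^ 2 < u
        · exact represents_two_mul 2 hlt (by simp; omega) (by omega)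
        · obtain rfl | rfl : u = 5 ∨ u = 13 := by omega
          all_goals
            interval_cases c <;>
              first | omega | exact represents_of_smallCheck (by decide +kernel)
  · by_cases h3 : u % 3 = 0
    · by_cases hlt : c * 4 ^ 2 < u
      · exact represents_two_mul 4 hlt (by simp; omega) (by omega)
      · obtain ⟨t, ht⟩ : ∃ t, u = 6 * t + 3 := ⟨u / 6, by omega⟩
        subst ht
        have : t < 13 := by omega
        interval_cases c
        all_goals
          interval_cases t <;>
            first | omega | exact represents_of_smallCheck (by decide +kernel)
    · exact represents_two_mul 0 (by omega) (by simp; omega) (by push_cast; omega)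

theorem two_universal_of_even {c : ℕ} (hc : 1 ≤ c) (hc5 : c ≤ 5) (n : ℕ) :
    Represents 2 (2 * c) n := by
  induction n using Nat.strong_induction_on with
  | _ n ih =>
    by_cases h0 : n = 0
    · exact ⟨0, 0, 0, 0, by simp [h0]⟩
    by_cases h2 : n % 2 = 1
    · exact represents_of_T₂ 0 (by simpa using T₂_odd n h2)
    by_cases h4 : n % 4 = 0
    · have := (ih (n / 4) (by omega)).four_mul
      rwa [Nat.mul_div_cancel' (by omega)] at this
    by_cases h3 : c = 3 ∧ n % 3 = 0
    · obtain ⟨rfl, h3⟩ := h3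
      have := Represents.three_mul (a := 2) (c := 2) (ih (n / 3) (by omega))
      rwa [Nat.mul_div_cancel' (by omega)] at this
    · have := two_even_of_odd (u := n / 2) hc hc5 (by omega) (by omega)
      rwa [Nat.mul_div_cancel' (by omega)] at this

theorem loeschian_nonneg (z w : ℤ) : 0 ≤ z ^ 2 + z * w + w ^ 2 := by
  nlinarith [sq_nonneg (2 * z + w), sq_nonneg w]

theorem loeschian_mod (z w : ℤ) :
    (z ^ 2 + z * w + w ^ 2) % 3 ≠ 2 ∧ (z ^ 2 + z * w + w ^ 2) % 4 ≠ 2 := by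
  constructor
  · intro h
    have h4 := (ZMod.intCast_eq_intCast_iff' (z ^ 2 + z * w + w ^ 2) 2 3).2 (by simpa using h)
    push_cast at h4
    exact (by decide : ∀ z w : ZMod 3, z ^ 2 + z * w + w ^ 2 ≠ 2) _ _ h4
  · intro h
    have h4 := (ZMod.intCast_eq_intCast_iff' (z ^ 2 + z * w + w ^ 2) 2 4).2 (by simpa using h)
    push_cast at h4
    exact (by decide : ∀ z w : ZMod 4, z ^ 2 + z * w + w ^ 2 ≠ 2) _ _ h4

theorem eq_zero_of_mul_sq_lt {b n : ℕ} {y : ℤ} (hb : n < b) (h : b * y ^ 2 ≤ (n : ℤ)) : y = 0 := by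
  by_contra hy
  have : 0 < y ^ 2 := by positivity
  have : (n : ℤ) < b := by exact_mod_cast hb
  nlinarith

theorem le_two_of_represents {a b : ℕ} (hab : a ≤ b) (h : Represents a b 2) : a ≤ 2 := by
  by_contra ha
  obtain ⟨x, y, z, w, h⟩ := h
  have hN := loeschian_nonneg z w
  have hx : (0 : ℤ) ≤ a * x ^ 2 := by positivity
  have hy : (0 : ℤ) ≤ b * y ^ 2 := by positivity
  have hm := loeschian_mod z w
  obtain rfl : x = 0 := eq_zero_of_mul_sq_lt (n := 2) (b := a) (by omega) (by linarith)
  obtain rfl : y = 0 := eq_zero_of_mul_sq_lt (n := 2) (b := b) (by omega) (by linarith)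
  push_cast at h
  omega

theorem le_six_of_represents {b : ℕ} (h : Represents 1 b 6) : b ≤ 6 := by
  by_contra hb
  obtain ⟨x, y, z, w, h⟩ := h
  have hN := loeschian_nonneg z w
  have hm := loeschian_mod z w
  have hy : (0 : ℤ) ≤ b * y ^ 2 := by positivity
  have hx0 := sq_nonneg x
  push_cast at h
  obtain rfl : y = 0 := eq_zero_of_mul_sq_lt (n := 6) (b := b) (by omega) (by push_cast; linarith)
  have hx1 : x ≤ 2 := by nlinarith
  have hx2 : -2 ≤ x := by nlinarith
  interval_cases x <;> omega

theorem le_ten_of_represents {b : ℕ} (h : Represents 2 b 10) : b ≤ 10 := by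
  by_contra hb
  obtain ⟨x, y, z, w, h⟩ := h
  have hN := loeschian_nonneg z w
  have hm := loeschian_mod z w
  have hy : (0 : ℤ) ≤ b * y ^ 2 := by positivity
  have hx0 := sq_nonneg x
  push_cast at h
  obtain rfl : y = 0 := eq_zero_of_mul_sq_lt (n := 10) (b := b) (by omega) (by push_cast; linarith)
  have hx1 : x ≤ 2 := by nlinarith
  have hx2 : -2 ≤ x := by nlinarith
  interval_cases x <;> omega

theorem stmt_7 (a b : ℕ) (ha : 0 < a) (hb : 0 < b) (hab : a ≤ b)
    (h : ∀ n ∈ ({1, 2, 6, 10} : Set ℕ), ∃ x y z w : ℤ,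
      (n : ℤ) = a * x ^ 2 + b * y ^ 2 + (z ^ 2 + z * w + w ^ 2)) :
    ∀ n : ℕ, ∃ x y z w : ℤ,
      (n : ℤ) = a * x ^ 2 + b * y ^ 2 + (z ^ 2 + z * w + w ^ 2) := by
  intro n
  change Represents a b n
  have ha2 : a ≤ 2 := le_two_of_represents hab (h 2 (by simp))
  obtain rfl | rfl : a = 1 ∨ a = 2 := by omega
  · have hb6 : b ≤ 6 := le_six_of_represents (h 6 (by simp))
    by_cases h3 : b % 3 = 0
    · obtain rfl | rfl : b = 3 ∨ b = 6 := by omega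
      · exact one_three_universal n
      · exact one_six_universal n
    · exact one_universal_of_coprime h3 (by omega) n
  · have hb10 : b ≤ 10 := le_ten_of_represents (h 10 (by simp))
    by_cases h2 : b % 2 = 1
    · exact two_universal_of_odd h2 (by omega) (by omega) n
    · have := two_universal_of_even (c := b / 2) (by omega) (by omega) n
      rwa [Nat.mul_div_cancel' (by omega)] at this
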